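/- Let d ≥ 3 and let 𝒯 be an admissible T-mesh. Let A ∈ A_p be an anchor, T ∈ 𝕋_i a T-junction with associated cell Q = ascell(T), n ∈ {0,…,N_i}, and x ∈ supp(A) ∩ S_i(n). Assume: (1) cl(T) ∩ conv(P_{i,n}(A) ∪ {x}) ≠ ∅; (2) Q_{pdir(T)} ∩ conv(A_{pdir(T)} ∪ {x_{pdir(T)}}) ≠ ∅; (3) there exists y ∈ A_{pdir(T)} with y ≠ x_{pdir(T)}. Then for every direction ℓ ≠ i with p_ℓ ≥ 1 such that v_ℓ(A) ⋈ v_ℓ(T), one has x_ℓ ∈ conv(v_ℓ(T)). -/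

import Mathlib

/-!
Membership of `x ℓ` in the hull of the knot vector `V` of the T-junction is a statement about
counting knots. The overlap condition places `V` and the anchor's knot vector `V₁` as blocks in a
common vector `W`. If `x ℓ` were beyond `max V`, condition (1) (or condition (2), for odd degree in
the pointing direction) would put the central knot `α = inf A_ℓ` far enough to the left in `W` that
`V₁` has no more knots right of `α` than `V` has there; then `max V₁ ≤ max V`
(`exists_ge_of_blocks`), against `x ℓ ≤ max V₁`. The other side is symmetric
(`exists_le_of_blocks`).

For even degree `A_ℓ = (α, β)` is an open interval, and on the left side the conditions only bound
`β`. Passing from `β` to `α` uses that `gv_ℓ(A)` has no index strictly between `α` and `β`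
(`not_mem_gv_of_mem_Ioo`): an entity that meets the closure of an entity `F` is contained in that
closure. This is proved by induction on the bisections, together with the fact that all interval
components are dyadic subintervals of the intervals of the initial grid: of two nested ones, the
smaller equals the larger or avoids its midpoint (`dyadic_nested`).
-/

open Set

namespace TSpline

/-- A box in `ℝ^d`, given componentwise. -/
abbrev Box (d : ℕ) := Fin d → Set ℝ

/-- The subset of `ℝ^d` determined by a box. -/
def toSet {d : ℕ} (E : Box d) : Set (Fin d → ℝ) := Set.pi Set.univ E

/-- The closed index domain `cl Ω = ∏ₖ [0, Nₖ]`. -/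
def domain {d : ℕ} (N : Fin d → ℕ) : Set (Fin d → ℝ) :=
  Set.pi Set.univ (fun k => Set.Icc (0 : ℝ) (N k))

/-- The boundary `∂Ω` of the index domain. -/
def bdryDomain {d : ℕ} (N : Fin d → ℕ) : Set (Fin d → ℝ) := frontier (domain N)

/-- A component which is an integer singleton `{n}`, `0 ≤ n ≤ Nₖ`. -/
def IsSingletonComp (Nk : ℕ) (S : Set ℝ) : Prop :=
  ∃ n : ℕ, n ≤ Nk ∧ S = {(n : ℝ)}

/-- A component which is an open interval with integer endpoints in `[0, Nₖ]`. -/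
def IsIntervalComp (Nk : ℕ) (S : Set ℝ) : Prop :=
  ∃ a b : ℕ, a < b ∧ b ≤ Nk ∧ S = Set.Ioo (a : ℝ) (b : ℝ)

/-- A mesh entity: every component is an integer singleton or an open integer interval. -/
def IsMeshEntity {d : ℕ} (N : Fin d → ℕ) (E : Box d) : Prop :=
  ∀ k, IsSingletonComp (N k) (E k) ∨ IsIntervalComp (N k) (E k)

/-- The directions in which an entity has a singleton component. -/
def singDirs {d : ℕ} (E : Box d) : Set (Fin d) := {i | ∃ r : ℝ, E i = {r}}

/-- Split all entities of `M` contained in the region `D` whose `j`-th component is `Q j`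
into the three children obtained by bisecting the `j`-th component at `m`. -/
def midSplit {d : ℕ} (M : Set (Box d)) (Q : Box d) (j : Fin d) (m : ℝ) (D : Box d) :
    Set (Box d) :=
  (M \ {E | E ∈ M ∧ (∀ k, E k ⊆ D k) ∧ E j = Q j}) ∪
  ⋃ E ∈ {E | E ∈ M ∧ (∀ k, E k ⊆ D k) ∧ E j = Q j},
    ({Function.update E j (Set.Ioo (sInf (Q j)) m),
      Function.update E j {m},
      Function.update E j (Set.Ioo m (sSup (Q j)))} : Set (Box d))

/-- One symmetric bisection of a `d`-dimensional cell with integer midpoint. -/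
def BisectStep {d : ℕ} (N : Fin d → ℕ) (M M' : Set (Box d)) : Prop :=
  ∃ Q ∈ M, ∃ j : Fin d, ∃ a b mid : ℕ,
    (∀ k, IsIntervalComp (N k) (Q k)) ∧
    Q j = Set.Ioo (a : ℝ) (b : ℝ) ∧ a + b = 2 * mid ∧
    M' = midSplit M Q j (mid : ℝ) (fun k => closure (Q k))

/-- A tensor-product mesh with integer breakpoints. -/
def IsTensorMesh {d : ℕ} (N : Fin d → ℕ) (M : Set (Box d)) : Prop :=
  ∃ G : Fin d → Finset ℕ,
    (∀ k, 0 ∈ G k ∧ N k ∈ G k ∧ ∀ n ∈ G k, n ≤ N k) ∧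
    M = {E | ∀ k, (∃ n ∈ G k, E k = {(n : ℝ)}) ∨
          (∃ a ∈ G k, ∃ b ∈ G k, a < b ∧ (∀ c ∈ G k, c ≤ a ∨ b ≤ c) ∧
            E k = Set.Ioo (a : ℝ) (b : ℝ))}

/-- A T-mesh of the index domain: a finite disjoint partition of `cl Ω` into mesh
entities, obtained from a tensor-product mesh by repeated symmetric bisections. -/
structure TMesh (d : ℕ) (N : Fin d → ℕ) where
  entities : Set (Box d)
  finite : entities.Finite
  mem_entity : ∀ E ∈ entities, IsMeshEntity N E
  union_eq : (⋃ E ∈ entities, toSet E) = domain N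
  pairwise_disjoint : ∀ E ∈ entities, ∀ F ∈ entities, E ≠ F → toSet E ∩ toSet F = ∅
  constructed : ∃ M₀ : Set (Box d), IsTensorMesh N M₀ ∧
    Relation.ReflTransGen (BisectStep N) M₀ entities

variable {d : ℕ} {N : Fin d → ℕ}

/-- `H^k`: the entities with exactly `d - k` singleton components. -/
def Hdim (T : TMesh d N) (k : ℕ) : Set (Box d) :=
  {E ∈ T.entities | (singDirs E).ncard = d - k}

/-- The `j`-orthogonal skeleton `Sk_j`. -/
def skel (T : TMesh d N) (j : Fin d) : Set (Fin d → ℝ) :=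
  ⋃ F ∈ {F ∈ Hdim T (d - 1) | ∃ r : ℝ, F j = {r}}, closure (toSet F)

/-- The valence of a `(d-2)`-dimensional entity: the number of hyperfaces in whose
boundary it lies. -/
noncomputable def valence (T : TMesh d N) (J : Box d) : ℕ :=
  {F ∈ Hdim T (d - 1) | toSet J ⊆ frontier (toSet F)}.ncard

/-- A T-junction (hanging interface). -/
def IsTJunction (T : TMesh d N) (J : Box d) : Prop :=
  J ∈ Hdim T (d - 2) ∧ ¬ toSet J ⊆ bdryDomain N ∧ valence T J < 4

/-- `TJData T J Q i j`: `Q` is an associated cell of the T-junction `J`, with orthogonal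
direction `i` and pointing direction `j`. -/
def TJData (T : TMesh d N) (J Q : Box d) (i j : Fin d) : Prop :=
  Q ∈ Hdim T d ∧ toSet J ⊆ frontier (toSet Q) ∧
  closure (toSet J) ∩ Set.pi Set.univ (fun k => frontier (Q k)) = ∅ ∧
  i ≠ j ∧ (∃ r : ℝ, J i = {r}) ∧ (∃ r : ℝ, J j = {r}) ∧
  J i ⊆ Q i ∧ J i ≠ Q i ∧ J j ⊆ frontier (Q j)

/-- `⌊(p_k + 1)/2⌋`. -/
def halfdeg (p : Fin d → ℕ) (k : Fin d) : ℕ := (p k + 1) / 2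

/-- The active region `AR_p`. -/
def activeRegion (N p : Fin d → ℕ) : Set (Fin d → ℝ) :=
  Set.pi Set.univ (fun k => Set.Icc (halfdeg p k : ℝ) ((N k : ℝ) - (halfdeg p k : ℝ)))

/-- The slice `S_k(n)`. -/
def slice (N : Fin d → ℕ) (k : Fin d) (n : ℕ) : Set (Fin d → ℝ) :=
  {x ∈ domain N | x k = (n : ℝ)}

/-- The `k`-th frame region `FR^(k)`. -/
def frameRegion (N p : Fin d → ℕ) (k : Fin d) : Set (Fin d → ℝ) :=
  {x ∈ domain N | x k ∈ Set.Icc (0 : ℝ) (halfdeg p k : ℝ) ∪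
      Set.Icc ((N k : ℝ) - (halfdeg p k : ℝ)) (N k : ℝ)}

/-- Admissibility of a T-mesh. -/
def Admissible (p : Fin d → ℕ) (T : TMesh d N) : Prop :=
  (∀ k : Fin d, ∀ J Q : Box d, ∀ i j : Fin d, IsTJunction T J → TJData T J Q i j →
      (i = k ∨ j = k) → ¬ toSet J ⊆ frameRegion N p k) ∧
  (∀ k : Fin d, ∀ n : ℕ, (n ≤ halfdeg p k ∨ (N k - halfdeg p k ≤ n ∧ n ≤ N k)) →
      slice N k n ⊆ skel T k)

/-- Anchors of degree `p`. -/
def IsAnchor (p : Fin d → ℕ) (T : TMesh d N) (A : Box d) : Prop :=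
  A ∈ T.entities ∧ toSet A ⊆ activeRegion N p ∧
  ∀ j : Fin d, (∃ r : ℝ, A j = {r}) ↔ Odd (p j)

/-- `P_{j,n}(E)`: replace the `j`-th component of `E` by `{n}`. -/
def proj {d : ℕ} (E : Box d) (j : Fin d) (n : ℕ) : Box d :=
  Function.update E j {(n : ℝ)}

/-- The global knot vector `gv_j(E)` (as a set of integer indices). -/
def gv (T : TMesh d N) (j : Fin d) (E : Box d) : Set ℕ :=
  {n | n ≤ N j ∧ toSet (proj E j n) ⊆ skel T j}

/-- `V` is a block of consecutive entries of `G`. -/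
def IsBlockOf (V G : Set ℕ) : Prop :=
  V ⊆ G ∧ V.Finite ∧ ∀ g ∈ G, ∀ a ∈ V, ∀ b ∈ V, a ≤ g → g ≤ b → g ∈ V

/-- Two knot vectors overlap (`⋈`): both occur as blocks of consecutive entries of a
common knot vector. -/
def Overlaps (V₁ V₂ : Set ℕ) : Prop :=
  ∃ W : Set ℕ, W.Finite ∧ IsBlockOf V₁ W ∧ IsBlockOf V₂ W

/-- The convex hull in `ℝ` of a set of integer indices. -/
def convOf (V : Set ℕ) : Set ℝ := convexHull ℝ ((fun n : ℕ => (n : ℝ)) '' V)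

/-- The local knot vector of an anchor `A` in direction `j`: the block of `p_j + 2`
consecutive entries of `gv_j(A)` whose entry of rank `⌊(p_j+1)/2⌋` is `inf A_j`. -/
def IsAnchorKV (T : TMesh d N) (p : Fin d → ℕ) (A : Box d) (j : Fin d) (V : Set ℕ) : Prop :=
  IsBlockOf V (gv T j A) ∧ V.ncard = p j + 2 ∧
  ∃ a : ℕ, (a : ℝ) = sInf (A j) ∧ a ∈ V ∧ {v ∈ V | v < a}.ncard = halfdeg p j

open Classical in
noncomputable def anchorKV (T : TMesh d N) (p : Fin d → ℕ) (A : Box d) (j : Fin d) :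
    Set ℕ :=
  if h : ∃ V, IsAnchorKV T p A j V then h.choose else ∅

/-- The index support of an anchor. -/
noncomputable def suppA (T : TMesh d N) (p : Fin d → ℕ) (A : Box d) : Set (Fin d → ℝ) :=
  Set.pi Set.univ (fun k => convOf (anchorKV T p A k))

/-- The local knot vector of a T-junction `J` (with associated cell `Q`, orthogonal
direction `i`, pointing direction `j`) in direction `k`. -/
def IsTJKV (T : TMesh d N) (p : Fin d → ℕ) (J Q : Box d) (i j k : Fin d) (V : Set ℕ) :
    Prop :=
  if k = i then ∃ t : ℕ, J i = {(t : ℝ)} ∧ V = {t}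
  else if k = j then
    IsBlockOf V (gv T j J) ∧ V.ncard = p j + 1 ∧
    ((Even (p j) ∧ ∃ t : ℕ, J j = {(t : ℝ)} ∧ t ∈ V ∧ {v ∈ V | v < t}.ncard = p j / 2) ∨
     (Odd (p j) ∧ ∃ a b : ℕ, (a : ℝ) = sInf (Q j) ∧ (b : ℝ) = sSup (Q j) ∧ a ∈ V ∧ b ∈ V ∧
        {v ∈ V | v < a}.ncard = p j / 2 ∧ {v ∈ V | v < b}.ncard = p j / 2 + 1))
  else
    IsBlockOf V (gv T k J) ∧ V.ncard = p k + 2 + p k % 2 ∧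
    ∃ a b : ℕ, a ∈ V ∧ b ∈ V ∧ J k = Set.Ioo (a : ℝ) (b : ℝ) ∧
      {v ∈ V | v < a}.ncard = (p k + 1) / 2 ∧ {v ∈ V | v < b}.ncard = (p k + 1) / 2 + 1

/-- Local knot vector of a T-junction, quantifying over the (unique) associated data. -/
def IsTJKVFull (T : TMesh d N) (p : Fin d → ℕ) (J : Box d) (k : Fin d) (V : Set ℕ) :
    Prop :=
  ∃ Q : Box d, ∃ i j : Fin d, TJData T J Q i j ∧ IsTJKV T p J Q i j k V

open Classical in
noncomputable def tjKV (T : TMesh d N) (p : Fin d → ℕ) (J : Box d) (k : Fin d) : Set ℕ :=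
  if h : ∃ V, IsTJKVFull T p J k V then h.choose else ∅

/-- The geometric T-junction extension `GTJ(J)`. -/
noncomputable def GTJ (T : TMesh d N) (p : Fin d → ℕ) (J : Box d) : Set (Fin d → ℝ) :=
  Set.pi Set.univ (fun k => convOf (tjKV T p J k))

/-- `J` is a T-junction with orthogonal direction `i` and pointing direction `j`. -/
def HasDirs (T : TMesh d N) (J : Box d) (i j : Fin d) : Prop :=
  IsTJunction T J ∧ ∃ Q : Box d, TJData T J Q i j

/-- Strong geometric analysis-suitability. -/
def SGAS (T : TMesh d N) (p : Fin d → ℕ) : Prop :=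
  ∀ J₁ J₂ : Box d, ∀ i₁ j₁ i₂ j₂ : Fin d,
    HasDirs T J₁ i₁ j₁ → HasDirs T J₂ i₂ j₂ → i₁ ≠ i₂ →
    GTJ T p J₁ ∩ GTJ T p J₂ = ∅

/-- Weak geometric analysis-suitability. -/
def WGAS (T : TMesh d N) (p : Fin d → ℕ) : Prop :=
  ∀ J₁ J₂ : Box d, ∀ i₁ j₁ i₂ j₂ : Fin d,
    HasDirs T J₁ i₁ j₁ → HasDirs T J₂ i₂ j₂ → i₁ ≠ i₂ → j₁ ≠ j₂ →
    GTJ T p J₁ ∩ GTJ T p J₂ = ∅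

/-- The abstract T-junction extension `ATJ_j(n)`. -/
noncomputable def ATJ (T : TMesh d N) (p : Fin d → ℕ) (j : Fin d) (n : ℕ) :
    Set (Fin d → ℝ) :=
  slice N j n ∩
  (⋃ A ∈ {A : Box d | IsAnchor p T A ∧ n ∈ gv T j A}, suppA T p A) ∩
  (⋃ A ∈ {A : Box d | IsAnchor p T A ∧ n ∉ gv T j A}, suppA T p A)

/-- `ATJ_j = ⋃ₙ ATJ_j(n)`. -/
noncomputable def ATJfull (T : TMesh d N) (p : Fin d → ℕ) (j : Fin d) :
    Set (Fin d → ℝ) :=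
  ⋃ n ∈ Set.Iic (N j), ATJ T p j n

/-- Abstract analysis-suitability. -/
def AAS (T : TMesh d N) (p : Fin d → ℕ) : Prop :=
  ∀ i j : Fin d, i ≠ j → ∀ n m : ℕ, n ≤ N i → m ≤ N j →
    ATJ T p i n ∩ ATJ T p j m = ∅

/-- Two anchors weakly partially overlap. -/
def WeakPartOverlap (T : TMesh d N) (p : Fin d → ℕ) (A₁ A₂ : Box d) : Prop :=
  ∃ ℓ : Fin d, anchorKV T p A₁ ℓ ≠ anchorKV T p A₂ ℓ ∧
    Overlaps (anchorKV T p A₁ ℓ) (anchorKV T p A₂ ℓ)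

/-- Two anchors strongly partially overlap. -/
def StrongPartOverlap (T : TMesh d N) (p : Fin d → ℕ) (A₁ A₂ : Box d) : Prop :=
  suppA T p A₁ ∩ suppA T p A₂ = ∅ ∨
  d - 1 ≤ {k : Fin d | Overlaps (anchorKV T p A₁ k) (anchorKV T p A₂ k)}.ncard

/-- Weak dual-compatibility. -/
def WDC (T : TMesh d N) (p : Fin d → ℕ) : Prop :=
  ∀ A₁ A₂ : Box d, IsAnchor p T A₁ → IsAnchor p T A₂ → A₁ ≠ A₂ →
    WeakPartOverlap T p A₁ A₂

/-- Strong dual-compatibility. -/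
def SDC (T : TMesh d N) (p : Fin d → ℕ) : Prop :=
  ∀ A₁ A₂ : Box d, IsAnchor p T A₁ → IsAnchor p T A₂ → A₁ ≠ A₂ →
    StrongPartOverlap T p A₁ A₂

/-- `Q'` is a neighboring cell of `Q` in direction `ℓ`. -/
def NeighborInDir (T : TMesh d N) (Q Q' : Box d) (ℓ : Fin d) : Prop :=
  Q' ∈ Hdim T d ∧ Q' ≠ Q ∧
  (sSup (Q ℓ) = sInf (Q' ℓ) ∨ sSup (Q' ℓ) = sInf (Q ℓ)) ∧
  ∀ k : Fin d, k ≠ ℓ → (Q k ∩ Q' k).Nonempty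

/-- Assumption A: every cell has neighbor cells in the active region in at least three
pairwise distinct directions. -/
def AssumptionA (T : TMesh d N) (p : Fin d → ℕ) : Prop :=
  ∀ Q ∈ Hdim T d, ∃ l₁ l₂ l₃ : Fin d, l₁ ≠ l₂ ∧ l₁ ≠ l₃ ∧ l₂ ≠ l₃ ∧
    ∀ l ∈ ({l₁, l₂, l₃} : Set (Fin d)),
      ∃ Q' : Box d, NeighborInDir T Q Q' l ∧ toSet Q' ⊆ activeRegion N p

/-- The extended region `D` of Algorithm `subdiv`. -/
def extendD (N p : Fin d → ℕ) (Q : Box d) (j : Fin d) : Box d := fun ℓ =>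
  closure (Q ℓ) ∪
  {x : ℝ | ℓ ≠ j ∧ sInf (Q ℓ) = (halfdeg p ℓ : ℝ) ∧
      x ∈ Set.Icc (0 : ℝ) (halfdeg p ℓ : ℝ)} ∪
  {x : ℝ | ℓ ≠ j ∧ sSup (Q ℓ) = (N ℓ : ℝ) - (halfdeg p ℓ : ℝ) ∧
      x ∈ Set.Icc ((N ℓ : ℝ) - (halfdeg p ℓ : ℝ)) (N ℓ : ℝ)}

/-- The entity set produced by Algorithm `subdiv(𝒯, Q, j)`. -/
def subdivEntities (N p : Fin d → ℕ) (M : Set (Box d)) (Q : Box d) (j : Fin d) :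
    Set (Box d) :=
  midSplit M Q j ((sInf (Q j) + sSup (Q j)) / 2) (extendD N p Q j)

open Classical in
/-- The componentwise minimal bounding box `M(E,F)`. -/
noncomputable def MBox {d : ℕ} (E F : Box d) : Box d := fun ℓ =>
  if (E ℓ ∩ F ℓ).Nonempty then E ℓ ∩ F ℓ
  else if sSup (E ℓ) ≤ sInf (F ℓ) then Set.Icc (sSup (E ℓ)) (sInf (F ℓ))
  else Set.Icc (sSup (F ℓ)) (sInf (E ℓ))

/-- `V` is the local knot vector of `E` (an anchor or a T-junction) in direction `j`. -/
def IsLocalKVOf (T : TMesh d N) (p : Fin d → ℕ) (E : Box d) (j : Fin d) (V : Set ℕ) :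
    Prop :=
  (IsAnchor p T E ∧ IsAnchorKV T p E j V) ∨
  (IsTJunction T E ∧ IsTJKVFull T p E j V)

end TSpline

namespace TSpline

/-! ### Dyadic components -/

/-- `(a, b)` is a dyadic subinterval of an interval `(a₀, b₀)` between consecutive elements of the
grid `G`: it is the `i`-th of the `2 ^ e` subintervals of equal length. -/
def IsDyadic (G : Finset ℕ) (a b : ℕ) : Prop :=
  ∃ a₀ ∈ G, ∃ b₀ ∈ G, (∀ c ∈ G, c ≤ a₀ ∨ b₀ ≤ c) ∧ a₀ ≤ a ∧ a < b ∧ b ≤ b₀ ∧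
    ∃ e i : ℕ, (b - a : ℤ) * 2 ^ e = b₀ - a₀ ∧ (a : ℤ) = a₀ + i * (b - a)

/-- A component that is an integer singleton or a dyadic open interval. -/
def GoodComp (G : Finset ℕ) (S : Set ℝ) : Prop :=
  (∃ n : ℕ, S = {(n : ℝ)}) ∨ ∃ a b : ℕ, IsDyadic G a b ∧ S = Ioo (a : ℝ) b

lemma IsDyadic.lt {G : Finset ℕ} {a b : ℕ} (h : IsDyadic G a b) : a < b := by
  obtain ⟨_, _, _, _, _, _, h, _⟩ := h
  exact h

lemma IsDyadic.halves {G : Finset ℕ} {a b m : ℕ} (h : IsDyadic G a b) (hm : a + b = 2 * m) :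
    IsDyadic G a m ∧ IsDyadic G m b := by
  obtain ⟨a₀, ha₀, b₀, hb₀, hc, h1, h2, h3, e, i, h4, h5⟩ := h
  have hb : (b : ℤ) = 2 * m - a := by omega
  refine ⟨⟨a₀, ha₀, b₀, hb₀, hc, h1, by omega, by omega, e + 1, 2 * i, ?_, ?_⟩,
    ⟨a₀, ha₀, b₀, hb₀, hc, by omega, by omega, h3, e + 1, 2 * i + 1, ?_, ?_⟩⟩
  · rw [← h4, hb]; ring
  · rw [hb] at h5; push_cast; linarith
  · rw [← h4, hb]; ring
  · rw [hb] at h5 ⊢; push_cast; linarith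

/-- A dyadic interval inside another one is equal to it or lies in one of its halves. -/
lemma dyadic_nested {G : Finset ℕ} {a b c f m : ℕ} (h : IsDyadic G a b) (h' : IsDyadic G c f)
    (hac : a ≤ c) (hfb : f ≤ b) (hm : a + b = 2 * m) :
    (c = a ∧ f = b) ∨ f ≤ m ∨ m ≤ c := by
  obtain ⟨a₀, ha₀, b₀, hb₀, hc, h1, h2, h3, e, i, h4, h5⟩ := h
  obtain ⟨a₁, ha₁, b₁, hb₁, hc', h1', h2', h3', e', i', h4', h5'⟩ := h'
  obtain rfl : a₁ = a₀ := by
    have := hc a₁ ha₁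
    have := hc' a₀ ha₀
    omega
  obtain rfl : b₁ = b₀ := by
    have := hc b₁ hb₁
    have := hc' b₀ hb₀
    omega
  rcases lt_or_ge e e' with hlt | hge
  · -- a strictly finer level: `m` is a multiple of the smaller length away from the base point
    obtain ⟨u, rfl⟩ : ∃ u, e' = e + 1 + u := ⟨e' - e - 1, by omega⟩
    have hlen : (b - a : ℤ) = (f - c) * 2 ^ (1 + u) := by
      have hp : (0 : ℤ) < 2 ^ e := by positivity
      have : ((b - a : ℤ) - (f - c) * 2 ^ (1 + u)) * 2 ^ e = 0 := by
        have := h4.trans h4'.symm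
        rw [sub_mul, this]
        ring
      rcases mul_eq_zero.1 this with h | h
      · linarith
      · omega
    have hmm : (m : ℤ) = a₁ + (i * 2 ^ (1 + u) + 2 ^ u) * (f - c) := by
      have h6 : (2 : ℤ) * m = 2 * (a₁ + (i * 2 ^ (1 + u) + 2 ^ u) * (f - c)) := by
        have : (2 : ℤ) * m = 2 * a + (b - a) := by omega
        have h7 : (a : ℤ) = a₁ + i * ((f - c) * 2 ^ (1 + u)) := by rw [← hlen]; exact h5
        rw [this, hlen, h7]
        ring
      linarith
    have hpos : (0 : ℤ) < f - c := by omega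
    rcases lt_or_ge (i' : ℤ) (i * 2 ^ (1 + u) + 2 ^ u) with hq | hq
    · right; left
      have : ((i' : ℤ) + 1) * (f - c) ≤ (i * 2 ^ (1 + u) + 2 ^ u) * (f - c) :=
        mul_le_mul_of_nonneg_right (by omega) hpos.le
      have : (f : ℤ) ≤ m := by linarith
      exact_mod_cast this
    · right; right
      have : (i * 2 ^ (1 + u) + 2 ^ u) * (f - c : ℤ) ≤ i' * (f - c) :=
        mul_le_mul_of_nonneg_right hq hpos.le
      have : (m : ℤ) ≤ c := by linarith
      exact_mod_cast this
  · -- a level that is not finer: the lengths agree, hence so do the intervals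
    left
    have hpow : (2 : ℤ) ^ e' ≤ 2 ^ e := pow_le_pow_right₀ (by norm_num) hge
    have hp : (0 : ℤ) < 2 ^ e' := by positivity
    have h6 : (b - a : ℤ) * 2 ^ e' ≤ (f - c) * 2 ^ e' := by
      calc (b - a : ℤ) * 2 ^ e' ≤ (b - a) * 2 ^ e :=
            mul_le_mul_of_nonneg_left hpow (by omega)
        _ = (f - c) * 2 ^ e' := h4.trans h4'.symm
    have := le_of_mul_le_mul_right h6 hp
    omega

lemma closure_Ioo_nat {a b : ℕ} (h : a < b) :
    closure (Ioo (a : ℝ) b) = Icc (a : ℝ) b :=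
  closure_Ioo (by exact_mod_cast h.ne)

lemma nat_Ioo_subset_Icc {a b c f : ℕ} (h : c < f) (hs : Ioo (c : ℝ) f ⊆ Icc (a : ℝ) b) :
    a ≤ c ∧ f ≤ b := by
  have h2 := closure_mono hs
  rw [closure_Ioo_nat h, isClosed_Icc.closure_eq] at h2
  have hcf : (c : ℝ) ≤ f := by exact_mod_cast h.le
  exact ⟨by exact_mod_cast (h2 (left_mem_Icc.2 hcf)).1,
    by exact_mod_cast (h2 (right_mem_Icc.2 hcf)).2⟩

lemma nat_Ioo_inj {a b c f : ℕ} (h : a < b) (h' : c < f) (he : Ioo (a : ℝ) b = Ioo (c : ℝ) f) :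
    a = c ∧ b = f := by
  have h1 := nat_Ioo_subset_Icc h (he.subset.trans Ioo_subset_Icc_self)
  have h2 := nat_Ioo_subset_Icc h' (he.symm.subset.trans Ioo_subset_Icc_self)
  omega

/-- The three pieces into which `(a, b)` is split at `m`. -/
def IsPiece (a b m : ℕ) (X : Set ℝ) : Prop :=
  X = Ioo (a : ℝ) m ∨ X = {(m : ℝ)} ∨ X = Ioo (m : ℝ) b

lemma IsPiece.subset {a b m : ℕ} {X : Set ℝ} (h : IsPiece a b m X) (h1 : a < m) (h2 : m < b) :
    X ⊆ Ioo (a : ℝ) b := by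
  have h1' : (a : ℝ) < m := by exact_mod_cast h1
  have h2' : (m : ℝ) < b := by exact_mod_cast h2
  rcases h with rfl | rfl | rfl
  · exact Ioo_subset_Ioo_right h2'.le
  · rintro _ rfl
    exact ⟨h1', h2'⟩
  · exact Ioo_subset_Ioo_left h1'.le

lemma piece_subset_closure {a b m : ℕ} {X Y : Set ℝ} (h1 : a < m) (h2 : m < b)
    (hY : X ⊆ Ioo (a : ℝ) m ∨ X ⊆ {(m : ℝ)} ∨ X ⊆ Ioo (m : ℝ) b)
    (hY' : IsPiece a b m Y) (hne : (X ∩ closure Y).Nonempty) : X ⊆ closure Y := by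
  obtain ⟨z, hz, hzY⟩ := hne
  rcases hY' with rfl | rfl | rfl
  all_goals
    simp only [closure_Ioo_nat h1, closure_Ioo_nat h2, closure_singleton, mem_Icc,
      mem_singleton_iff] at hzY ⊢
    intro w hw
    rcases hY with h | h | h
    all_goals
      have hz := h hz
      have hw := h hw
      simp only [mem_Ioo, mem_singleton_iff, mem_Icc] at hz hw ⊢
      have h1' : (a : ℝ) < m := by exact_mod_cast h1
      have h2' : (m : ℝ) < b := by exact_mod_cast h2
      grind

/-! ### Closures of entities are unions of entities -/

/-- The inductive invariant of the mesh construction: dyadic components, and an entity meeting the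
closure of another one is contained in that closure. -/
def MeshInv {d : ℕ} (G : Fin d → Finset ℕ) (M : Set (Box d)) : Prop :=
  (∀ E ∈ M, ∀ k, GoodComp (G k) (E k)) ∧
  ∀ E ∈ M, ∀ F ∈ M, (∀ k, (E k ∩ closure (F k)).Nonempty) → ∀ k, E k ⊆ closure (F k)

lemma meshInv_tensor {d : ℕ} {N : Fin d → ℕ} {M : Set (Box d)} (h : IsTensorMesh N M) :
    ∃ G, MeshInv G M := by
  obtain ⟨G, hG, rfl⟩ := h
  refine ⟨G, ?_, ?_⟩
  · intro E hE k
    rcases hE k with ⟨n, -, h⟩ | ⟨a, ha, b, hb, hab, hc, h⟩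
    · exact Or.inl ⟨n, h⟩
    · exact Or.inr ⟨a, b, ⟨a, ha, b, hb, hc, le_rfl, hab, le_rfl, 0, 0, by simp, by simp⟩, h⟩
  · intro E hE F hF hEF k
    obtain ⟨z, hz, hz'⟩ := hEF k
    intro w hw
    rcases hE k with ⟨n, hn, h⟩ | ⟨a, ha, b, hb, hab, hc, h⟩
    · rw [h] at hz hw
      rw [mem_singleton_iff] at hz hw
      rwa [hw, ← hz]
    · rcases hF k with ⟨n', hn', h'⟩ | ⟨a', ha', b', hb', hab', hc', h'⟩
      · rw [h', closure_singleton, mem_singleton_iff] at hz'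
        rw [h, hz', mem_Ioo] at hz
        have h1 : a < n' := by exact_mod_cast hz.1
        have h2 : n' < b := by exact_mod_cast hz.2
        have := hc n' hn'
        omega
      · rw [h', closure_Ioo_nat hab', mem_Icc] at hz' ⊢
        rw [h, mem_Ioo] at hz hw
        have h1 : a' < b := by exact_mod_cast hz'.1.trans_lt hz.2
        have h2 : a < b' := by exact_mod_cast hz.1.trans_le hz'.2
        have h3 : a' ≤ a := by have := hc a' ha'; omega
        have h4 : b ≤ b' := by have := hc b' hb'; omega
        have h3' : (a' : ℝ) ≤ a := by exact_mod_cast h3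
        have h4' : (b : ℝ) ≤ b' := by exact_mod_cast h4
        exact ⟨by linarith [hw.1], by linarith [hw.2]⟩

lemma meshInv_step {d : ℕ} {N : Fin d → ℕ} {G : Fin d → Finset ℕ} {M M' : Set (Box d)}
    (h : MeshInv G M) (hs : BisectStep N M M') : MeshInv G M' := by
  obtain ⟨Q, hQ, j, a, b, m, hint, hQj, hm, rfl⟩ := hs
  obtain ⟨hgood, hcl⟩ := h
  have hab : IsDyadic (G j) a b := by
    obtain ⟨a', b', hlt, -, he⟩ := hint j
    have hab' : a < b := by
      have : (Ioo (a : ℝ) b).Nonempty := by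
        rw [← hQj, he]
        exact nonempty_Ioo.2 (by exact_mod_cast hlt)
      exact_mod_cast nonempty_Ioo.1 this
    rcases hgood Q hQ j with ⟨n, hn⟩ | ⟨c, f, hcf, he'⟩
    · exfalso
      have hinf := Ioo_infinite (show (a : ℝ) < b by exact_mod_cast hab')
      rw [← hQj, hn] at hinf
      exact hinf (finite_singleton _)
    · obtain ⟨rfl, rfl⟩ := nat_Ioo_inj hab' hcf.lt (hQj.symm.trans he')
      exact hcf
  have hab' := hab.lt
  have habR : (a : ℝ) < b := by exact_mod_cast hab'
  have ham : a < m := by omega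
  have hmb : m < b := by omega
  -- every new entity is an old one that is not split, or a child of a split one
  have hM' : ∀ E' ∈ midSplit M Q j (m : ℝ) (fun k => closure (Q k)),
      (E' ∈ M ∧ ¬ ((∀ k, E' k ⊆ closure (Q k)) ∧ E' j = Ioo (a : ℝ) b)) ∨
      ∃ E ∈ M, (∀ k, E k ⊆ closure (Q k)) ∧ E j = Ioo (a : ℝ) b ∧
        ∃ X, IsPiece a b m X ∧ E' = Function.update E j X := by
    intro E' hE'
    rcases hE' with ⟨h1, h2⟩ | hE'
    · left
      refine ⟨h1, fun h3 => h2 ⟨h1, h3.1, ?_⟩⟩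
      rw [h3.2, hQj]
    · right
      simp only [mem_iUnion, exists_prop] at hE'
      obtain ⟨E, ⟨hE, hE1, hE2⟩, hE'⟩ := hE'
      refine ⟨E, hE, hE1, hE2.trans hQj, ?_⟩
      rw [hQj, csInf_Ioo habR, csSup_Ioo habR] at hE'
      rcases hE' with h | h | h
      · exact ⟨_, Or.inl rfl, h⟩
      · exact ⟨_, Or.inr (Or.inl rfl), h⟩
      · exact ⟨_, Or.inr (Or.inr rfl), h⟩
  have hparent : ∀ E' ∈ midSplit M Q j (m : ℝ) (fun k => closure (Q k)),
      ∃ E ∈ M, ∀ k, E' k ⊆ E k := by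
    intro E' hE'
    rcases hM' E' hE' with h | ⟨E, hE, -, hEj, X, hX, rfl⟩
    · exact ⟨E', h.1, fun k => subset_rfl⟩
    · refine ⟨E, hE, fun k => ?_⟩
      by_cases hk : k = j
      · subst hk
        rw [Function.update_self, hEj]
        exact hX.subset ham hmb
      · rw [Function.update_of_ne hk]
  refine ⟨?_, ?_⟩
  · intro E' hE' k
    rcases hM' E' hE' with h | ⟨E, hE, -, hEj, X, hX, rfl⟩
    · exact hgood E' h.1 k
    · by_cases hk : k = j
      · subst hk
        rw [Function.update_self]
        rcases hX with h | h | h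
        · exact Or.inr ⟨a, m, (hab.halves hm).1, h⟩
        · exact Or.inl ⟨m, h⟩
        · exact Or.inr ⟨m, b, (hab.halves hm).2, h⟩
      · rw [Function.update_of_ne hk]
        exact hgood E hE k
  · intro E' hE' F' hF' hEF
    rcases hM' F' hF' with hF | ⟨F, hF, hFQ, hFj, Y, hY, rfl⟩
    · obtain ⟨E, hE, hsub⟩ := hparent E' hE'
      have := hcl E hE F' hF.1 fun k => (hEF k).mono (inter_subset_inter_left _ (hsub k))
      exact fun k => (hsub k).trans (this k)
    · have hsubF : ∀ k, Function.update F j Y k ⊆ F k := by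
        intro k
        by_cases hk : k = j
        · subst hk
          rw [Function.update_self, hFj]
          exact hY.subset ham hmb
        · rw [Function.update_of_ne hk]
      have hFQ' : ∀ k, closure (F k) ⊆ closure (Q k) := fun k =>
        closure_minimal (hFQ k) isClosed_closure
      intro k
      by_cases hk : k = j
      · subst hk
        have hEFk := hEF k
        rw [Function.update_self] at hEFk ⊢
        rcases hM' E' hE' with ⟨hE, hns⟩ | ⟨E, hE, -, hEj, X, hX, rfl⟩
        · have hE1 := hcl E' hE F hF fun l =>
            (hEF l).mono (inter_subset_inter_right _ (closure_mono (hsubF l)))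
          have hE2 : ∀ l, E' l ⊆ closure (Q l) := fun l => (hE1 l).trans (hFQ' l)
          have hE3 : E' k ≠ Ioo (a : ℝ) b := fun h => hns ⟨hE2, h⟩
          rcases hgood E' hE k with ⟨n, hn⟩ | ⟨c, f, hcf, he⟩
          · obtain ⟨z, hz, hz'⟩ := hEFk
            rw [hn, mem_singleton_iff] at hz
            rw [hn, singleton_subset_iff, ← hz]
            exact hz'
          · have h5 := hE2 k
            rw [he, hQj, closure_Ioo_nat hab'] at h5
            obtain ⟨hac, hfb⟩ := nat_Ioo_subset_Icc hcf.lt h5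
            -- `E' k` is strictly inside `Q k`, so it avoids the midpoint
            have hside : E' k ⊆ Ioo (a : ℝ) m ∨ E' k ⊆ {(m : ℝ)} ∨ E' k ⊆ Ioo (m : ℝ) b := by
              rw [he]
              rcases dyadic_nested hab hcf hac hfb hm with ⟨rfl, rfl⟩ | h | h
              · exact absurd he hE3
              · exact Or.inl (Ioo_subset_Ioo (by exact_mod_cast hac) (by exact_mod_cast h))
              · exact Or.inr (Or.inr
                  (Ioo_subset_Ioo (by exact_mod_cast h) (by exact_mod_cast hfb)))
            exact piece_subset_closure ham hmb hside hY hEFk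
        · rw [Function.update_self] at hEFk ⊢
          refine piece_subset_closure ham hmb ?_ hY hEFk
          rcases hX with h | h | h
          · exact Or.inl h.subset
          · exact Or.inr (Or.inl h.subset)
          · exact Or.inr (Or.inr h.subset)
      · obtain ⟨E, hE, hsub⟩ := hparent E' hE'
        have := hcl E hE F hF fun l => (hEF l).mono
          (inter_subset_inter (hsub l) (closure_mono (hsubF l)))
        rw [Function.update_of_ne hk]
        exact (hsub k).trans (this k)

lemma subset_closure_of_inter {d : ℕ} {N : Fin d → ℕ} (T : TMesh d N) {E F : Box d}
    (hE : E ∈ T.entities) (hF : F ∈ T.entities) {z : Fin d → ℝ} (hz : z ∈ toSet E)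
    (hz' : z ∈ closure (toSet F)) (k : Fin d) : E k ⊆ closure (F k) := by
  obtain ⟨M₀, hM₀, hrel⟩ := T.constructed
  obtain ⟨G, hG⟩ := meshInv_tensor hM₀
  have hinv : MeshInv G T.entities := by
    clear hE hF
    generalize T.entities = M at hrel
    induction hrel with
    | refl => exact hG
    | tail _ hs ih => exact meshInv_step ih hs
  rw [toSet, closure_pi_set] at hz'
  exact hinv.2 E hE F hF (fun l => ⟨z l, hz l (mem_univ _), hz' l (mem_univ _)⟩) k

/-- The skeleton does not cut through the interior of an interval component of an entity. -/
lemma not_mem_gv_of_mem_Ioo {d : ℕ} {N : Fin d → ℕ} (T : TMesh d N) {A : Box d}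
    (hA : A ∈ T.entities) {l : Fin d} {α β γ : ℕ} (hAl : A l = Ioo (α : ℝ) β)
    (h1 : α < γ) (h2 : γ < β) : γ ∉ gv T l A := by
  intro hγ
  have hne : ∀ k, (A k).Nonempty := by
    intro k
    rcases T.mem_entity A hA k with ⟨n, -, h⟩ | ⟨a, b, hab, -, h⟩
    · rw [h]; exact singleton_nonempty _
    · rw [h]; exact nonempty_Ioo.2 (by exact_mod_cast hab)
  choose y hy using hne
  have hmem : Function.update y l (γ : ℝ) ∈ toSet (proj A l γ) := by
    intro k _
    by_cases hk : k = l
    · subst hk; simp [proj]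
    · simpa [proj, hk] using hy k
  have hmemA : Function.update y l (γ : ℝ) ∈ toSet A := by
    intro k _
    by_cases hk : k = l
    · subst hk
      rw [hAl, Function.update_self]
      exact ⟨by exact_mod_cast h1, by exact_mod_cast h2⟩
    · simpa [hk] using hy k
  have hsk := hγ.2 hmem
  simp only [skel, mem_iUnion, exists_prop] at hsk
  obtain ⟨F, ⟨hF, r, hr⟩, hcl⟩ := hsk
  have hsub := subset_closure_of_inter T hA hF.1 hmemA hcl l
  rw [hr, closure_singleton, hAl] at hsub
  exact Ioo_infinite (show (α : ℝ) < β by exact_mod_cast h1.trans h2)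
    ((finite_singleton r).subset hsub)

/-! ### Counting knots in overlapping blocks -/

/-- If `V` has at least as many knots right of `α` as `V₁` has, then `V₁` does not reach beyond
the right end of `V`. -/
lemma exists_ge_of_blocks {V₁ V W B : Set ℕ} {α s : ℕ} (h₁ : IsBlockOf V₁ W)
    (h : IsBlockOf V W) (hα : α ∈ V₁) (hs : s ∈ V) (hαs : α ≤ s) (hB : B ⊆ V)
    (hBα : ∀ b ∈ B, α < b) (hcard : {v ∈ V₁ | α < v}.ncard ≤ B.ncard) :
    ∀ v₁ ∈ V₁, ∃ v ∈ V, v₁ ≤ v := by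
  intro v₁ hv₁
  by_contra! hlt
  have hsub : insert v₁ B ⊆ {v ∈ V₁ | α < v} := by
    rintro w (rfl | hw)
    · exact ⟨hv₁, hαs.trans_lt (hlt s hs)⟩
    · exact ⟨h₁.2.2 w (h.1 (hB hw)) α hα v₁ hv₁ (hBα w hw).le (hlt w (hB hw)).le, hBα w hw⟩
  have h2 := ncard_le_ncard hsub (h₁.2.1.subset (sep_subset _ _))
  rw [ncard_insert_of_notMem (fun hc => (hlt _ (hB hc)).false) (h.2.1.subset hB)] at h2
  omega

lemma exists_le_of_blocks {V₁ V W B : Set ℕ} {α s : ℕ} (h₁ : IsBlockOf V₁ W)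
    (h : IsBlockOf V W) (hα : α ∈ V₁) (hs : s ∈ V) (hαs : s ≤ α) (hB : B ⊆ V)
    (hBα : ∀ b ∈ B, b < α) (hcard : {v ∈ V₁ | v < α}.ncard ≤ B.ncard) :
    ∀ v₁ ∈ V₁, ∃ v ∈ V, v ≤ v₁ := by
  intro v₁ hv₁
  by_contra! hlt
  have hsub : insert v₁ B ⊆ {v ∈ V₁ | v < α} := by
    rintro w (rfl | hw)
    · exact ⟨hv₁, (hlt s hs).trans_le hαs⟩
    · exact ⟨h₁.2.2 w (h.1 (hB hw)) v₁ hv₁ α hα (hlt w (hB hw)).le (hBα w hw).le, hBα w hw⟩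
  have h2 := ncard_le_ncard hsub (h₁.2.1.subset (sep_subset _ _))
  rw [ncard_insert_of_notMem (fun hc => (hlt _ (hB hc)).false) (h.2.1.subset hB)] at h2
  omega

lemma ncard_split_le {V : Set ℕ} (hV : V.Finite) (a : ℕ) :
    {v ∈ V | v < a}.ncard + {v ∈ V | a ≤ v}.ncard = V.ncard := by
  rw [← ncard_union_eq _ (hV.subset (sep_subset _ _)) (hV.subset (sep_subset _ _))]
  · congr 1
    ext v
    simp only [mem_union, mem_ofPred_eq]
    have := lt_or_ge v a
    tauto
  · rw [Set.disjoint_left]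
    intro v h1 h2
    exact absurd h1.2 (not_lt.2 h2.2)

lemma ncard_split_lt {V : Set ℕ} (hV : V.Finite) {a : ℕ} (ha : a ∈ V) :
    {v ∈ V | v < a}.ncard + 1 + {v ∈ V | a < v}.ncard = V.ncard := by
  rw [← ncard_split_le hV a]
  have : {v ∈ V | a ≤ v} = insert a {v ∈ V | a < v} := by
    ext v
    simp only [mem_insert_iff, mem_ofPred_eq]
    grind
  rw [this, ncard_insert_of_notMem (by simp) (hV.subset (sep_subset _ _))]
  omega

/-- Two knots of a block with consecutive ranks are consecutive in the common vector. -/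
lemma consecutive_of_rank {V W : Set ℕ} (h : IsBlockOf V W) {a b r : ℕ} (ha : a ∈ V) (hb : b ∈ V)
    (h1 : {v ∈ V | v < a}.ncard = r) (h2 : {v ∈ V | v < b}.ncard = r + 1) :
    a < b ∧ ∀ w ∈ W, w ≤ a ∨ b ≤ w := by
  have hfin : ∀ c, {v ∈ V | v < c}.Finite := fun c => h.2.1.subset (sep_subset _ _)
  have hab : a < b := by
    by_contra! hba
    have : {v ∈ V | v < b} ⊆ {v ∈ V | v < a} := fun v hv => ⟨hv.1, hv.2.trans_le hba⟩
    have := ncard_le_ncard this (hfin a)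
    omega
  refine ⟨hab, fun w hw => ?_⟩
  by_contra! hc
  have hwV := h.2.2 w hw a ha b hb hc.1.le hc.2.le
  have hsub : insert w (insert a {v ∈ V | v < a}) ⊆ {v ∈ V | v < b} := by
    rintro v (rfl | rfl | hv)
    · exact ⟨hwV, hc.2⟩
    · exact ⟨ha, hab⟩
    · exact ⟨hv.1, hv.2.trans hab⟩
  have := ncard_le_ncard hsub (hfin b)
  rw [ncard_insert_of_notMem (by simp; omega) ((hfin a).insert a),
    ncard_insert_of_notMem (by simp) (hfin a)] at this
  omega

/-- With `A_ℓ = (α, β)` and no knot of `V₁` strictly inside, a knot of `W` left of `β` is at most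
`α`: otherwise it would lie in the block `V₁`, between `α` and the next knot. -/
lemma le_of_lt_sup {V₁ W : Set ℕ} (h₁ : IsBlockOf V₁ W) {α β c : ℕ} (hα : α ∈ V₁)
    (hne : 0 < {v ∈ V₁ | α < v}.ncard) (hgap : ∀ v ∈ V₁, α < v → β ≤ v) (hc : c ∈ W)
    (hcβ : c < β) : c ≤ α := by
  by_contra! hlt
  obtain ⟨γ, hγ, hαγ⟩ := nonempty_of_ncard_ne_zero hne.ne'
  have hβγ := hgap γ hγ hαγ
  have := hgap c (h₁.2.2 c hc α hα γ hγ hlt.le (by omega)) hlt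
  omega

/-! ### Convex hulls -/

lemma exists_ge_of_mem_convOf {V : Set ℕ} {x : ℝ} (h : x ∈ convOf V) : ∃ v ∈ V, x ≤ v := by
  by_contra! hlt
  have hsub : (fun n : ℕ => (n : ℝ)) '' V ⊆ Iio x := by
    rintro _ ⟨v, hv, rfl⟩
    exact hlt v hv
  exact lt_irrefl x (convexHull_min hsub (convex_Iio x) h)

lemma exists_le_of_mem_convOf {V : Set ℕ} {x : ℝ} (h : x ∈ convOf V) : ∃ v ∈ V, (v : ℝ) ≤ x := by
  by_contra! hlt
  have hsub : (fun n : ℕ => (n : ℝ)) '' V ⊆ Ioi x := by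
    rintro _ ⟨v, hv, rfl⟩
    exact hlt v hv
  exact lt_irrefl x (convexHull_min hsub (convex_Ioi x) h)

lemma mem_convOf {V : Set ℕ} {x : ℝ} (h1 : ∃ v ∈ V, (v : ℝ) ≤ x) (h2 : ∃ v ∈ V, x ≤ v) :
    x ∈ convOf V := by
  obtain ⟨u, hu, hux⟩ := h1
  obtain ⟨v, hv, hxv⟩ := h2
  exact (convex_convexHull ℝ _).ordConnected.out
    (subset_convexHull ℝ _ (mem_image_of_mem (fun n : ℕ => (n : ℝ)) hu))
    (subset_convexHull ℝ _ (mem_image_of_mem (fun n : ℕ => (n : ℝ)) hv)) ⟨hux, hxv⟩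

lemma exists_le_of_hull {S : Set ℝ} {x z c : ℝ} (hz : z ∈ convexHull ℝ (S ∪ {x})) (hzc : z ≤ c)
    (hx : c < x) : ∃ y ∈ S, y ≤ c := by
  by_contra! hlt
  have hsub : S ∪ {x} ⊆ Ioi c := by
    rintro w (hw | rfl)
    · exact hlt w hw
    · exact hx
  exact absurd (convexHull_min hsub (convex_Ioi c) hz) (not_lt.2 hzc)

lemma exists_ge_of_hull {S : Set ℝ} {x z c : ℝ} (hz : z ∈ convexHull ℝ (S ∪ {x})) (hzc : c ≤ z)
    (hx : x < c) : ∃ y ∈ S, c ≤ y := by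
  by_contra! hlt
  have hsub : S ∪ {x} ⊆ Iio c := by
    rintro w (hw | rfl)
    · exact hlt w hw
    · exact hx
  exact absurd (convexHull_min hsub (convex_Iio c) hz) (not_lt.2 hzc)

lemma apply_mem_hull {d : ℕ} {E : Box d} {x z : Fin d → ℝ}
    (hz : z ∈ convexHull ℝ (toSet E ∪ {x})) (l : Fin d) :
    z l ∈ convexHull ℝ (E l ∪ {x l}) := by
  have h := mem_image_of_mem (LinearMap.proj l : (Fin d → ℝ) →ₗ[ℝ] ℝ) hz
  rw [LinearMap.image_convexHull] at h
  refine convexHull_mono ?_ h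
  rintro _ ⟨w, hw | rfl, rfl⟩
  · exact Or.inl (hw l (mem_univ _))
  · exact Or.inr rfl

/-! ### The two shapes of an anchor component -/

lemma anchorKV_spec {d : ℕ} {N : Fin d → ℕ} {T : TMesh d N} {p : Fin d → ℕ} {A : Box d}
    {l : Fin d} {x : ℝ} (hx : x ∈ convOf (anchorKV T p A l)) :
    IsAnchorKV T p A l (anchorKV T p A l) := by
  by_cases h : ∃ V, IsAnchorKV T p A l V
  · rw [anchorKV, dif_pos h]
    exact h.choose_spec
  · obtain ⟨v, hv, -⟩ := exists_ge_of_mem_convOf hx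
    rw [anchorKV, dif_neg h] at hv
    exact absurd hv (notMem_empty v)

/-- The shape of the component `A_ℓ` and of the knots around it, by parity of the degree. -/
lemma anchor_cases {d : ℕ} {N : Fin d → ℕ} {T : TMesh d N} {p : Fin d → ℕ} {A : Box d}
    (hA : IsAnchor p T A) {l : Fin d} {V₁ : Set ℕ} (h : IsAnchorKV T p A l V₁) :
    ∃ α ∈ V₁, {v ∈ V₁ | v < α}.ncard = (p l + 1) / 2 ∧
      {v ∈ V₁ | v < α}.ncard + 1 + {v ∈ V₁ | α < v}.ncard = p l + 2 ∧
      ((p l % 2 = 1 ∧ A l = {(α : ℝ)}) ∨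
       (p l % 2 = 0 ∧ ∃ β : ℕ, A l = Ioo (α : ℝ) β ∧ ∀ v ∈ V₁, α < v → β ≤ v)) := by
  obtain ⟨hbl, hcard, α, hα, hαV, hrank⟩ := h
  refine ⟨α, hαV, hrank, by rw [ncard_split_lt hbl.2.1 hαV, hcard], ?_⟩
  rcases T.mem_entity A hA.1 l with ⟨n, -, hn⟩ | ⟨a, b, hab, -, hI⟩
  · left
    refine ⟨Nat.odd_iff.1 ((hA.2.2 l).1 ⟨_, hn⟩), ?_⟩
    rw [hα, hn, csInf_singleton]
  · right
    have habR : (a : ℝ) < b := by exact_mod_cast hab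
    rw [hI, csInf_Ioo habR] at hα
    obtain rfl : α = a := by exact_mod_cast hα
    refine ⟨?_, b, hI, fun v hv hlt => ?_⟩
    · rw [← Nat.not_odd_iff, ← hA.2.2 l]
      rintro ⟨r, hr⟩
      have := Ioo_infinite habR
      rw [← hI, hr] at this
      exact this (finite_singleton r)
    · by_contra! hc
      exact not_mem_gv_of_mem_Ioo T hA.1 hI hlt hc (hbl.1 hv)

end TSpline

/-- If `x ∈ supp(A) ∩ S_i(n)` and a T-junction `T ∈ 𝕋_i` with
associated cell `Q` and pointing direction `k` satisfies conditions (1)-(3), then for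
every direction `ℓ ≠ i` with `p_ℓ ≥ 1` in which the local knot vectors of `A` and `T`
overlap, `x_ℓ` lies in the convex hull of the `ℓ`-th local knot vector of `T`. -/
theorem TSpline.conditions_imply_x_in_gtj_component
    {d : ℕ} {N p : Fin d → ℕ} (hd : 3 ≤ d) (T : TSpline.TMesh d N)
    (hadm : TSpline.Admissible p T)
    (A : TSpline.Box d) (hA : TSpline.IsAnchor p T A)
    (J Q : TSpline.Box d) (i k : Fin d)
    (hJ : TSpline.IsTJunction T J) (hdata : TSpline.TJData T J Q i k)
    (n : ℕ) (hn : n ≤ N i)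
    (x : Fin d → ℝ)
    (hx : x ∈ TSpline.suppA T p A ∩ TSpline.slice N i n)
    (h1 : (closure (TSpline.toSet J) ∩
        convexHull ℝ (TSpline.toSet (TSpline.proj A i n) ∪ {x})).Nonempty)
    (h2 : (Q k ∩ convexHull ℝ (A k ∪ {x k})).Nonempty)
    (h3 : ∃ y ∈ A k, y ≠ x k) :
    ∀ ℓ : Fin d, ℓ ≠ i → 1 ≤ p ℓ →
      ∀ V : Set ℕ, TSpline.IsTJKV T p J Q i k ℓ V →
        TSpline.Overlaps (TSpline.anchorKV T p A ℓ) V →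
        x ℓ ∈ TSpline.convOf V := by
  classical
  intro l hli hpl V hV hov
  have hxl : x l ∈ convOf (anchorKV T p A l) := hx.1 l (mem_univ l)
  have hKV := anchorKV_spec hxl
  obtain ⟨v₁, hv₁, hxv₁⟩ := exists_ge_of_mem_convOf hxl
  obtain ⟨u₁, hu₁, hu₁x⟩ := exists_le_of_mem_convOf hxl
  obtain ⟨α, hα, hlo, hup, hshape⟩ := anchor_cases hA hKV
  obtain ⟨W, -, hW₁, hW⟩ := hov
  generalize anchorKV T p A l = V₁ at *
  obtain ⟨z, hzJ, hzA⟩ := h1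
  have hzl : z l ∈ convexHull ℝ (A l ∪ {x l}) := by
    have := apply_mem_hull hzA l
    rwa [proj, Function.update_of_ne hli] at this
  have hzJl : z l ∈ closure (J l) := by
    rw [toSet, closure_pi_set] at hzJ
    exact hzJ l (mem_univ l)
  -- the two halves of the claim, each by contradiction and a comparison of `V₁` with `V`
  suffices hmain :
      ((∀ v ∈ V, (v : ℝ) < x l) → ∀ w ∈ V₁, ∃ v ∈ V, w ≤ v) ∧
      ((∀ v ∈ V, x l < (v : ℝ)) → ∀ w ∈ V₁, ∃ v ∈ V, v ≤ w) by
    apply mem_convOf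
    · by_contra! hc
      obtain ⟨v, hv, hle⟩ := hmain.2 hc u₁ hu₁
      have : (v : ℝ) ≤ u₁ := by exact_mod_cast hle
      linarith [hc v hv]
    · by_contra! hc
      obtain ⟨v, hv, hle⟩ := hmain.1 hc v₁ hv₁
      have : (v₁ : ℝ) ≤ v := by exact_mod_cast hle
      linarith [hc v hv]
  rw [IsTJKV, if_neg hli] at hV
  by_cases hlk : l = k
  · subst hlk
    rw [if_pos rfl] at hV
    obtain ⟨hbl, hcard, ⟨hev, t, hJt, ht, hrank⟩ | ⟨hod, a, b, ha, hb, haV, hbV, hra, hrb⟩⟩ := hV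
    · -- pointing direction, even degree
      rw [Nat.even_iff] at hev
      obtain ⟨-, β, hAl, hgap⟩ := hshape.resolve_left (by omega)
      rw [hJt, closure_singleton, mem_singleton_iff] at hzJl
      have hge := ncard_split_le hbl.2.1 t
      constructor
      · intro hc
        obtain ⟨y, hy, hyt⟩ := exists_le_of_hull hzl hzJl.le (hc t ht)
        rw [hAl] at hy
        have hαt : α < t := by exact_mod_cast hy.1.trans_le hyt
        exact exists_ge_of_blocks (B := {v ∈ V | t ≤ v}) hW₁ hW hα ht hαt.le (sep_subset _ _)
          (fun v hv => hαt.trans_le hv.2) (by omega)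
      · intro hc
        obtain ⟨y, hy, hyt⟩ := exists_ge_of_hull hzl hzJl.ge (hc t ht)
        rw [hAl] at hy
        have htβ : t < β := by exact_mod_cast hyt.trans_lt hy.2
        have htα : t ≤ α := le_of_lt_sup hW₁ hα (by omega) hgap (hW.1 ht) htβ
        exact exists_le_of_blocks (B := {v ∈ V | v < t}) hW₁ hW hα ht htα (sep_subset _ _)
          (fun v hv => hv.2.trans_le htα) (by omega)
    · -- pointing direction, odd degree: here condition (2) is the relevant one
      rw [Nat.odd_iff] at hod
      obtain ⟨-, hAl⟩ := hshape.resolve_right (by omega)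
      obtain ⟨hab, hcons⟩ := consecutive_of_rank hW haV hbV hra hrb
      obtain ⟨w, hwQ, hwA⟩ := h2
      have hQl : Q l = Ioo (a : ℝ) b := by
        rcases T.mem_entity Q hdata.1.1 l with ⟨m, -, hm⟩ | ⟨a', b', hab', -, hI⟩
        · exfalso
          rw [hm, csInf_singleton] at ha
          rw [hm, csSup_singleton] at hb
          have : a = b := by exact_mod_cast ha.trans hb.symm
          omega
        · have habR : (a' : ℝ) < b' := by exact_mod_cast hab'
          rw [hI, csInf_Ioo habR] at ha
          rw [hI, csSup_Ioo habR] at hb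
          rw [hI, ha, hb]
      rw [hQl] at hwQ
      have hgt := ncard_split_lt hbl.2.1 haV
      constructor
      · intro hc
        obtain ⟨y, hy, hyw⟩ := exists_le_of_hull hwA le_rfl (hwQ.2.trans (hc b hbV))
        rw [hAl, mem_singleton_iff] at hy
        subst hy
        have hαb : α < b := by exact_mod_cast hyw.trans_lt hwQ.2
        have hαa : α ≤ a := (hcons α (hW₁.1 hα)).resolve_right (by omega)
        exact exists_ge_of_blocks (B := {v ∈ V | a < v}) hW₁ hW hα haV hαa (sep_subset _ _)
          (fun v hv => hαa.trans_lt hv.2) (by omega)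
      · intro hc
        obtain ⟨y, hy, hyw⟩ := exists_ge_of_hull hwA le_rfl ((hc a haV).trans hwQ.1)
        rw [hAl, mem_singleton_iff] at hy
        subst hy
        have haα : a < α := by exact_mod_cast hwQ.1.trans_le hyw
        have hbα : b ≤ α := (hcons α (hW₁.1 hα)).resolve_left (by omega)
        exact exists_le_of_blocks (B := {v ∈ V | v < b}) hW₁ hW hα hbV hbα (sep_subset _ _)
          (fun v hv => hv.2.trans_le hbα) (by omega)
  · rw [if_neg hlk] at hV
    obtain ⟨hbl, hcard, a, b, haV, hbV, hJl, hra, hrb⟩ := hV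
    obtain ⟨hab, hcons⟩ := consecutive_of_rank hW haV hbV hra hrb
    rw [hJl, closure_Ioo_nat hab] at hzJl
    have hgta := ncard_split_lt hbl.2.1 haV
    have hgtb := ncard_split_lt hbl.2.1 hbV
    rcases hshape with ⟨hod, hAl⟩ | ⟨hev, β, hAl, hgap⟩
    · constructor
      · intro hc
        obtain ⟨y, hy, hyb⟩ := exists_le_of_hull hzl hzJl.2 (hc b hbV)
        rw [hAl, mem_singleton_iff] at hy
        subst hy
        have hαb : α ≤ b := by exact_mod_cast hyb
        exact exists_ge_of_blocks (B := {v ∈ V | b < v}) hW₁ hW hα hbV hαb (sep_subset _ _)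
          (fun v hv => hαb.trans_lt hv.2) (by omega)
      · intro hc
        obtain ⟨y, hy, hya⟩ := exists_ge_of_hull hzl hzJl.1 (hc a haV)
        rw [hAl, mem_singleton_iff] at hy
        subst hy
        have haα : a ≤ α := by exact_mod_cast hya
        exact exists_le_of_blocks (B := {v ∈ V | v < a}) hW₁ hW hα haV haα (sep_subset _ _)
          (fun v hv => hv.2.trans_le haα) (by omega)
    · constructor
      · intro hc
        obtain ⟨y, hy, hyb⟩ := exists_le_of_hull hzl hzJl.2 (hc b hbV)
        rw [hAl] at hy
        have hαb : α < b := by exact_mod_cast hy.1.trans_le hyb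
        have hαa : α ≤ a := (hcons α (hW₁.1 hα)).resolve_right (by omega)
        exact exists_ge_of_blocks (B := {v ∈ V | a < v}) hW₁ hW hα haV hαa (sep_subset _ _)
          (fun v hv => hαa.trans_lt hv.2) (by omega)
      · intro hc
        obtain ⟨y, hy, hya⟩ := exists_ge_of_hull hzl hzJl.1 (hc a haV)
        rw [hAl] at hy
        have haβ : a < β := by exact_mod_cast hya.trans_lt hy.2
        have haα : a ≤ α := le_of_lt_sup hW₁ hα (by omega) hgap (hW.1 haV) haβ
        exact exists_le_of_blocks (B := {v ∈ V | v < a}) hW₁ hW hα haV haα (sep_subset _ _)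
          (fun v hv => hv.2.trans_le haα) (by omega)
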